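/- Let x1, x2, x3 > 0 with x1 + x2 + x3 = 1. The Arnoux–Rauzy map T^{x1,x2,x3} is minimal if and only if (x1, x2, x3) belongs to the Rauzy gasket 𝓡. -/

import Mathlib

open Set

noncomputable section

local instance : Fact ((0:ℝ) < 1) := ⟨one_pos⟩

/-- Representative in `[0,1)` of a point of the circle `ℝ/ℤ`. -/
def rep (x : AddCircle (1:ℝ)) : ℝ := (AddCircle.equivIco 1 0 x : ℝ)

/-- Projection `ℝ → ℝ/ℤ`. -/
def toCirc (t : ℝ) : AddCircle (1:ℝ) := (t : AddCircle (1:ℝ))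

/-- The Arnoux–Rauzy map `T^{x1,x2,x3}` of `ℝ/ℤ`: on each half of the interval of
lengths `x j` (for `j = 1,2,3`, starting at `c (j-1) = x1 + ⋯ + x(j-1)`) it translates
by `± x j / 2 + 1/2`. -/
def ARmap (x1 x2 x3 : ℝ) (u : AddCircle (1:ℝ)) : AddCircle (1:ℝ) :=
  if rep u < x1/2 then toCirc (rep u + x1/2 + 1/2)
  else if rep u < x1 then toCirc (rep u - x1/2 + 1/2)
  else if rep u < x1 + x2/2 then toCirc (rep u + x2/2 + 1/2)
  else if rep u < x1 + x2 then toCirc (rep u - x2/2 + 1/2)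
  else if rep u < x1 + x2 + x3/2 then toCirc (rep u + x3/2 + 1/2)
  else toCirc (rep u - x3/2 + 1/2)

/-- One branch of the Rauzy subtractive algorithm. -/
def rauzyStepAt (j : Fin 3) (x : Fin 3 → ℝ) : Fin 3 → ℝ :=
  fun i => (if i = j then 2 * x j - 1 else x i) / x j

/-- The Rauzy gasket. -/
def InRauzyGasket (x : Fin 3 → ℝ) : Prop :=
  (∀ i, 0 ≤ x i) ∧ x 0 + x 1 + x 2 = 1 ∧
  ∃ seq : ℕ → (Fin 3 → ℝ), seq 0 = x ∧
    ∀ n, ∃ j, 1/2 < seq n j ∧ seq (n + 1) = rauzyStepAt j (seq n)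

/-- A self-map of the circle is minimal if every forward orbit is dense. -/
def IsMinimal (G : AddCircle (1:ℝ) → AddCircle (1:ℝ)) : Prop :=
  ∀ u : AddCircle (1:ℝ), Dense (Set.range fun n : ℕ => G^[n] u)

/-!
Exchanging the two halves of each block and then rotating by half a turn makes sense for arbitrary
positive lengths. If one of the lengths exceeds the sum of the other two, then the first-return map
to the corresponding block, with return times `1` and `2`, is again such a map, and its lengths are
those produced by the subtractive algorithm.

If all orbits are dense, one length must dominate: otherwise there is a periodic orbit of period
three or, when one length equals the sum of the other two, an invariant finite union of intervals
which is not dense. Density passes to first-return maps, so the algorithm runs forever.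

Conversely, in an infinite run of the algorithm every letter is subtracted from infinitely often and
the total length tends to `0`. It follows that at each stage every orbit visits every half block.
Now fix `g > 0`. At a stage where the total length is below `g`, an arc of length `g` is the whole
circle, and the property that every orbit visits every arc of length `g` is inherited by the earlier
stages: an arc which is not the image of an arc of the induced map contains the image of a half
block.
-/

section Induction

variable {α β : Type*} {f : α → α} {D A B : Set α} {g : β → β} {E C : Set β} {ψ : β → α}

/-- Every forward `f`-orbit that starts in `D` meets `A`. Minimality and all the intermediate
recurrence properties are of this form. -/
def EveryOrbitMeets (f : α → α) (D A : Set α) : Prop :=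
  ∀ u ∈ D, ∃ n, f^[n] u ∈ A

lemma EveryOrbitMeets.trans (hA : EveryOrbitMeets f D A) (hf : MapsTo f D D)
    (hAB : EveryOrbitMeets f (D ∩ A) B) : EveryOrbitMeets f D B := by
  intro u hu
  obtain ⟨n, hn⟩ := hA u hu
  obtain ⟨m, hm⟩ := hAB _ ⟨hf.iterate n hu, hn⟩
  exact ⟨m + n, by rwa [Function.iterate_add_apply]⟩

lemma EveryOrbitMeets.mono (hA : EveryOrbitMeets f D A) (hAB : A ⊆ B) : EveryOrbitMeets f D B :=
  fun u hu => (hA u hu).imp fun _ hn => hAB hn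

lemma EveryOrbitMeets.of_mapsTo (hA : EveryOrbitMeets f D A) (hf : MapsTo f D D)
    (hAB : MapsTo f (D ∩ A) B) : EveryOrbitMeets f D B :=
  hA.trans hf fun _ hu => ⟨1, hAB hu⟩

lemma EveryOrbitMeets.of_inter_preimage_subset (hA : EveryOrbitMeets f D A) (hf : MapsTo f D D)
    (hAB : D ∩ f ⁻¹' A ⊆ B) : EveryOrbitMeets f D B := by
  intro u hu
  obtain ⟨n, hn⟩ := hA (f u) (hf hu)
  rw [← Function.iterate_succ_apply, Function.iterate_succ_apply'] at hn
  exact ⟨n, hAB ⟨hf.iterate n hu, hn⟩⟩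

lemma EveryOrbitMeets.inter_nonempty {O : Set α} (hA : EveryOrbitMeets f D A) (hO : O.Nonempty)
    (hOD : O ⊆ D) (hf : MapsTo f O O) : (O ∩ A).Nonempty := by
  obtain ⟨u, hu⟩ := hO
  obtain ⟨n, hn⟩ := hA u (hOD hu)
  exact ⟨_, hf.iterate n hu, hn⟩

/-- `ψ` identifies `g` on `E` with the map induced by `f` on `ψ '' E`: every `f`-orbit in `D` visits
`ψ '' E`, and `ψ (g v)` is the first return of `ψ v`. Only return times `1` and `2` are allowed,
which is what one step of the Rauzy algorithm produces. -/
structure IsInduced (f : α → α) (D : Set α) (g : β → β) (E : Set β) (ψ : β → α) : Prop where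
  mapsTo_base : MapsTo g E E
  mapsTo : MapsTo ψ E D
  visits : EveryOrbitMeets f D (ψ '' E)
  return_eq : ∀ v ∈ E,
    f (ψ v) = ψ (g v) ∨ f (ψ v) ∉ ψ '' E ∧ f (f (ψ v)) = ψ (g v)

namespace IsInduced

lemma exists_iterate_eq (h : IsInduced f D g E ψ) {v : β} (hv : v ∈ E) (m : ℕ) :
    ∃ n, f^[n] (ψ v) = ψ (g^[m] v) := by
  induction m with
  | zero => exact ⟨0, rfl⟩
  | succ m ih =>
    obtain ⟨n, hn⟩ := ih
    rw [Function.iterate_succ_apply']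
    rcases h.return_eq _ (h.mapsTo_base.iterate m hv) with hr | ⟨-, hr⟩
    · exact ⟨n + 1, by rw [Function.iterate_succ_apply', hn, hr]⟩
    · exact ⟨n + 2, by rw [Function.iterate_succ_apply', Function.iterate_succ_apply', hn, hr]⟩

lemma exists_iterate_base_eq (h : IsInduced f D g E ψ) {v : β} (hv : v ∈ E) {n : ℕ}
    (hn : f^[n] (ψ v) ∈ ψ '' E) : ∃ m, f^[n] (ψ v) = ψ (g^[m] v) := by
  induction n using Nat.strong_induction_on generalizing v with
  | _ n ih =>
    obtain _ | n := n
    · exact ⟨0, rfl⟩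
    rw [Function.iterate_succ_apply] at hn ⊢
    rcases h.return_eq v hv with hr | ⟨hout, hr⟩
    · rw [hr] at hn ⊢
      obtain ⟨m, hm⟩ := ih n (by lia) (h.mapsTo_base hv) hn
      exact ⟨m + 1, hm⟩
    · obtain _ | n := n
      · exact absurd hn hout
      rw [Function.iterate_succ_apply, hr] at hn ⊢
      obtain ⟨m, hm⟩ := ih n (by lia) (h.mapsTo_base hv) hn
      exact ⟨m + 1, hm⟩

lemma everyOrbitMeets (h : IsInduced f D g E ψ) (hf : MapsTo f D D) (hC : EveryOrbitMeets g E C)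
    (hCA : EveryOrbitMeets f (ψ '' (E ∩ C)) A) : EveryOrbitMeets f D A := by
  refine h.visits.trans hf ?_
  rintro _ ⟨-, v, hv, rfl⟩
  obtain ⟨m, hm⟩ := hC v hv
  obtain ⟨n, hn⟩ := h.exists_iterate_eq hv m
  obtain ⟨k, hk⟩ := hCA _ ⟨_, ⟨h.mapsTo_base.iterate m hv, hm⟩, hn.symm⟩
  exact ⟨k + n, by rwa [Function.iterate_add_apply]⟩

lemma everyOrbitMeets_base (h : IsInduced f D g E ψ) (hA : EveryOrbitMeets f D A)
    (hAE : A ⊆ ψ '' E) : EveryOrbitMeets g E (ψ ⁻¹' A) := by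
  intro v hv
  obtain ⟨n, hn⟩ := hA _ (h.mapsTo hv)
  obtain ⟨m, hm⟩ := h.exists_iterate_base_eq hv (hAE hn)
  exact ⟨m, show ψ _ ∈ A from hm ▸ hn⟩

end IsInduced

end Induction

section Circle

variable {l p q g t u v : ℝ}

lemma eq_of_modEq_of_mem_Ico (hl : 0 < l) (hu : u ∈ Ico p (p + l)) (hv : v ∈ Ico p (p + l))
    (h : u ≡ v [PMOD l]) : u = v := by
  rw [← (toIcoMod_eq_self hl).2 hu, ← (toIcoMod_eq_self hl).2 hv, (toIcoMod_inj hl).2 h]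

lemma modEq_toIcoMod (hl : 0 < l) (p u : ℝ) : u ≡ toIcoMod hl p u [PMOD l] :=
  (toIcoMod_inj hl (c := p)).1 (toIcoMod_toIcoMod hl p p u).symm

lemma add_period_modEq (v l : ℝ) : v + l ≡ v [PMOD l] :=
  AddCommGroup.add_modEq_left.2 AddCommGroup.self_modEq_zero

/-- Rotation by `t` of the circle `ℝ/lℤ`, read in the fundamental domain `[0, l)` (for
`0 ≤ t ≤ l`). -/
def circleRotation (l t v : ℝ) : ℝ := if v + t < l then v + t else v + t - l

lemma circleRotation_modEq (l t v : ℝ) : circleRotation l t v ≡ v + t [PMOD l] := by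
  unfold circleRotation
  split_ifs
  · exact AddCommGroup.modEq_rfl
  · simpa using (add_period_modEq (v + t - l) l).symm

lemma mapsTo_circleRotation (ht : t ∈ Icc 0 l) :
    MapsTo (circleRotation l t) (Ico 0 l) (Ico 0 l) := by
  rintro v ⟨hv0, hvl⟩
  unfold circleRotation
  split_ifs <;> constructor <;> linarith [ht.1, ht.2]

lemma circleRotation_image_Ico (ht : t ∈ Icc 0 l) :
    circleRotation l t '' Ico 0 l = Ico 0 l := by
  refine (mapsTo_circleRotation ht).image_subset.antisymm fun v hv => ?_
  have ht' : l - t ∈ Icc 0 l := ⟨by linarith [ht.2], by linarith [ht.1]⟩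
  refine ⟨circleRotation l (l - t) v, mapsTo_circleRotation ht' hv, ?_⟩
  obtain ⟨hv0, hvl⟩ := hv
  unfold circleRotation
  split_ifs <;> linarith [ht.1, ht.2]

lemma circleRotation_comm {s : ℝ} (hs : s ∈ Icc 0 l) (ht : t ∈ Icc 0 l) (hv : v ∈ Ico 0 l) :
    circleRotation l t (circleRotation l s v) = circleRotation l s (circleRotation l t v) := by
  obtain ⟨hv0, hvl⟩ := hv
  unfold circleRotation
  split_ifs <;> linarith [hs.1, hs.2, ht.1, ht.2]

/-- The arc of length `g` of the circle `ℝ/lℤ` that starts at `p`, as an `l`-periodic subset of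
`ℝ`. -/
def arc (l p g : ℝ) : Set ℝ := {u | ∃ t ∈ Ico p (p + g), u ≡ t [PMOD l]}

lemma Ico_subset_arc : Ico p (p + g) ⊆ arc l p g := fun u hu => ⟨u, hu, AddCommGroup.modEq_rfl⟩

lemma mem_arc_congr (h : u ≡ v [PMOD l]) : u ∈ arc l p g ↔ v ∈ arc l p g :=
  exists_congr fun _ => and_congr_right fun _ => ⟨h.symm.trans, h.trans⟩

lemma add_mem_arc_add (h : u ∈ arc l p g) (c : ℝ) : u + c ∈ arc l (p + c) g := by
  obtain ⟨t, ht, hut⟩ := h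
  exact ⟨t + c, ⟨by linarith [ht.1], by linarith [ht.2]⟩, hut.add_right c⟩

lemma arc_congr (h : p ≡ q [PMOD l]) : arc l p g = arc l q g := by
  have key {p q : ℝ} (h : p ≡ q [PMOD l]) : arc l p g ⊆ arc l q g := by
    rintro u ⟨t, ht, hut⟩
    refine ⟨t + (q - p), ⟨by linarith [ht.1], by linarith [ht.2]⟩, hut.trans ?_⟩
    simpa [add_sub_left_comm] using h.add_right (t - p)
  exact (key h).antisymm (key h.symm)

lemma arc_inter_Ico_subset (hl : 0 < l) (hp : 0 ≤ p) (hpg : p + g ≤ l) :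
    Ico 0 l ∩ arc l p g ⊆ Ico p (p + g) := by
  rintro u ⟨hu, t, ht, hut⟩
  have ht0 : t ∈ Ico 0 (0 + l) := ⟨by linarith [ht.1], by linarith [ht.2]⟩
  rwa [eq_of_modEq_of_mem_Ico hl (by simpa using hu) ht0 hut]

lemma arc_eq_univ (hl : 0 < l) (hg : l ≤ g) : arc l p g = univ := by
  refine eq_univ_of_forall fun u => ⟨toIcoMod hl p u, ?_, modEq_toIcoMod hl p u⟩
  exact Ico_subset_Ico_right (by linarith) (toIcoMod_mem_Ico hl p u)

end Circle

section Map

/-- The total length of the three blocks: the map of lengths `x` lives on `[0, total x)`. -/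
def total (x : Fin 3 → ℝ) : ℝ := x 0 + x 1 + x 2

/-- The left endpoint `c_{k-1}` of the `k`-th block (blocks are numbered from `0`). -/
def leftEnd (x : Fin 3 → ℝ) : Fin 3 → ℝ := ![0, x 0, x 0 + x 1]

/-- The six intervals exchanged by the Arnoux–Rauzy map: `half x (k, false)` and `half x (k, true)`
are the left and the right half of the `k`-th block. -/
def half (x : Fin 3 → ℝ) : Fin 3 × Bool → Set ℝ
  | (k, false) => Ico (leftEnd x k) (leftEnd x k + x k / 2)
  | (k, true) => Ico (leftEnd x k + x k / 2) (leftEnd x k + x k)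

/-- The involution that exchanges the two halves of each block. -/
def swapHalves (x : Fin 3 → ℝ) (u : ℝ) : ℝ :=
  if u < x 0 / 2 then u + x 0 / 2
  else if u < x 0 then u - x 0 / 2
  else if u < x 0 + x 1 / 2 then u + x 1 / 2
  else if u < x 0 + x 1 then u - x 1 / 2
  else if u < x 0 + x 1 + x 2 / 2 then u + x 2 / 2
  else u - x 2 / 2

/-- The Arnoux–Rauzy map with unnormalised lengths `x`, on the fundamental domain `[0, total x)`
of its circle: swap the halves of each block, then rotate by half a turn. -/
def arnouxRauzy (x : Fin 3 → ℝ) (u : ℝ) : ℝ :=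
  circleRotation (total x) (total x / 2) (swapHalves x u)

variable {x : Fin 3 → ℝ}

lemma total_eq_sum (x : Fin 3 → ℝ) : total x = ∑ i, x i := (Fin.sum_univ_three x).symm

lemma apply_le_total (hx : ∀ i, 0 < x i) (j : Fin 3) : x j ≤ total x := by
  rw [total_eq_sum]
  exact Finset.single_le_sum (fun i _ => (hx i).le) (Finset.mem_univ j)

lemma add_apply_le_total (hx : ∀ i, 0 < x i) {j k : Fin 3} (h : j ≠ k) :
    x j + x k ≤ total x := by
  rw [total_eq_sum]
  exact Finset.add_le_sum (fun i _ => (hx i).le) (Finset.mem_univ j) (Finset.mem_univ k) h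

lemma total_pos (hx : ∀ i, 0 < x i) : 0 < total x :=
  (hx 0).trans_le (apply_le_total hx 0)

lemma mapsTo_swapHalves (hx : ∀ i, 0 < x i) :
    MapsTo (swapHalves x) (Ico 0 (total x)) (Ico 0 (total x)) := by
  rintro u ⟨hl, hr⟩
  have h0 := hx 0
  have h1 := hx 1
  have h2 := hx 2
  simp only [swapHalves, total, mem_Ico] at *
  split_ifs <;> constructor <;> linarith

lemma mapsTo_arnouxRauzy (hx : ∀ i, 0 < x i) :
    MapsTo (arnouxRauzy x) (Ico 0 (total x)) (Ico 0 (total x)) := by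
  have hl := total_pos hx
  exact (mapsTo_circleRotation ⟨by linarith, by linarith⟩).comp (mapsTo_swapHalves hx)

end Map

section Step

variable {x : Fin 3 → ℝ} {j : Fin 3}

/-- The `j`-th length exceeds the sum of the other two, so the Rauzy algorithm applies. -/
def IsDominant (x : Fin 3 → ℝ) (j : Fin 3) : Prop := total x < 2 * x j

/-- The Rauzy subtractive step without normalisation: the two other lengths are subtracted from
the `j`-th one. -/
def subtract (j : Fin 3) (x : Fin 3 → ℝ) : Fin 3 → ℝ :=
  Function.update x j (2 * x j - total x)

lemma subtract_pos (hx : ∀ i, 0 < x i) (hj : IsDominant x j) (i : Fin 3) :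
    0 < subtract j x i := by
  obtain rfl | hij := eq_or_ne i j
  · simpa [subtract, IsDominant] using hj
  · simpa [subtract, hij] using hx i

lemma total_subtract (j : Fin 3) (x : Fin 3 → ℝ) : total (subtract j x) = x j := by
  have hsum := Finset.sum_sdiff (f := x) (Finset.singleton_subset_iff.2 (Finset.mem_univ j))
  rw [Finset.sum_singleton, ← total_eq_sum] at hsum
  rw [total_eq_sum, subtract, Finset.sum_update_of_mem (Finset.mem_univ j)]
  linarith

lemma subtract_zero (x : Fin 3 → ℝ) : subtract 0 x = ![x 0 - x 1 - x 2, x 1, x 2] := by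
  have h : 2 * x 0 - total x = x 0 - x 1 - x 2 := by
    unfold total
    ring
  rw [subtract, h]
  ext i
  fin_cases i <;> rfl

/-- The identification of the circle of the subtracted lengths with `[0, x 0)`, on which
`arnouxRauzy x` induces `arnouxRauzy (subtract 0 x)`. -/
def inducedBase (x : Fin 3 → ℝ) : ℝ → ℝ := circleRotation (x 0) ((x 1 + x 2) / 2)

/-- The composition `arnouxRauzy x ∘ inducedBase x` on `[0, x 0)`: it opens a slit of length
`x 1 + x 2` in the middle of the shortened block `0` and hence sends each half of the subtracted map
into the half with the same code. -/
def slit (x : Fin 3 → ℝ) (v : ℝ) : ℝ :=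
  if v < (x 0 - x 1 - x 2) / 2 then v else v + (x 1 + x 2)

lemma arnouxRauzy_inducedBase (hx : ∀ i, 0 < x i) (hd : IsDominant x 0) {v : ℝ}
    (hv : v ∈ Ico 0 (x 0)) : arnouxRauzy x (inducedBase x v) = slit x v := by
  obtain ⟨hv0, hv1⟩ := hv
  have h1 := hx 1
  have h2 := hx 2
  simp only [IsDominant, total] at hd
  simp only [arnouxRauzy, swapHalves, inducedBase, slit, circleRotation, total]
  split_ifs <;> linarith

lemma slit_mem_half (hx : ∀ i, 0 < x i) (hd : IsDominant x 0) {i : Fin 3 × Bool} {v : ℝ}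
    (hv : v ∈ half (subtract 0 x) i) : slit x v ∈ half x i := by
  have h1 := hx 1
  have h2 := hx 2
  simp only [IsDominant, total] at hd
  obtain ⟨k, σ⟩ := i
  fin_cases k <;> cases σ <;>
    simp only [half, leftEnd, subtract_zero, slit, Fin.zero_eta, Fin.mk_one, Fin.reduceFinMk,
      Matrix.cons_val, mem_Ico] at hv ⊢ <;>
    split_ifs <;> constructor <;> linarith

lemma swapHalves_subtract_mem (hx : ∀ i, 0 < x i) (hd : IsDominant x 0) {v : ℝ}
    (hv : v ∈ Ico (x 0 - x 1 - x 2) (x 0)) :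
    swapHalves (subtract 0 x) v ∈ Ico (x 0 - x 1 - x 2) (x 0) := by
  obtain ⟨hv0, hv1⟩ := hv
  have h1 := hx 1
  have h2 := hx 2
  simp only [IsDominant, total] at hd
  simp only [swapHalves, subtract_zero, Matrix.cons_val]
  split_ifs <;> constructor <;> linarith

lemma swapHalves_add (hx : ∀ i, 0 < x i) (hd : IsDominant x 0) {v : ℝ}
    (hv : v ∈ Ico (x 0 - x 1 - x 2) (x 0)) :
    swapHalves x (v + (x 1 + x 2)) = swapHalves (subtract 0 x) v + (x 1 + x 2) := by
  obtain ⟨hv0, hv1⟩ := hv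
  have h1 := hx 1
  have h2 := hx 2
  simp only [IsDominant, total] at hd
  simp only [swapHalves, subtract_zero, Matrix.cons_val]
  split_ifs <;> linarith

lemma slit_of_ge (hd : IsDominant x 0) {v : ℝ} (hv : x 0 - x 1 - x 2 ≤ v) :
    slit x v = v + (x 1 + x 2) := by
  simp only [IsDominant, total] at hd
  exact if_neg (by linarith)

lemma arnouxRauzy_slit (hx : ∀ i, 0 < x i) (hd : IsDominant x 0) {v : ℝ}
    (hv : v ∈ Ico (x 0 - x 1 - x 2) (x 0)) :
    arnouxRauzy x (slit x v) = inducedBase x (arnouxRauzy (subtract 0 x) v) := by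
  obtain ⟨hw0, hw1⟩ := swapHalves_subtract_mem hx hd hv
  rw [slit_of_ge hd hv.1, arnouxRauzy, arnouxRauzy, total_subtract, swapHalves_add hx hd hv]
  simp only [IsDominant, total] at hd
  unfold inducedBase circleRotation total
  split_ifs <;> linarith

lemma slit_eq_inducedBase (hx : ∀ i, 0 < x i) {v : ℝ}
    (hv : v ∈ Ico 0 (x 0 - x 1 - x 2)) :
    slit x v = inducedBase x (arnouxRauzy (subtract 0 x) v) := by
  obtain ⟨hv0, hv1⟩ := hv
  have h1 := hx 1
  have h2 := hx 2
  simp only [arnouxRauzy, swapHalves, inducedBase, slit, circleRotation, total,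
    subtract_zero, Matrix.cons_val]
  split_ifs <;> linarith

end Step

section FirstReturn

variable {x : Fin 3 → ℝ}

lemma half_add_mem_Icc (hx : ∀ i, 0 < x i) (hd : IsDominant x 0) :
    (x 1 + x 2) / 2 ∈ Icc 0 (x 0) := by
  simp only [IsDominant, total] at hd
  constructor <;> linarith [hx 1, hx 2]

lemma inducedBase_image (hx : ∀ i, 0 < x i) (hd : IsDominant x 0) :
    inducedBase x '' Ico 0 (x 0) = Ico 0 (x 0) :=
  circleRotation_image_Ico (half_add_mem_Icc hx hd)

/-- Every orbit enters `[0, x 0)` because half a turn moves the shorter complement into it. -/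
lemma everyOrbitMeets_Ico_zero (hx : ∀ i, 0 < x i) (hd : IsDominant x 0) :
    EveryOrbitMeets (arnouxRauzy x) (Ico 0 (total x)) (Ico 0 (x 0)) := by
  rintro u ⟨hu0, hul⟩
  obtain hu | hu := lt_or_ge u (x 0)
  · exact ⟨0, hu0, hu⟩
  refine ⟨1, ?_⟩
  have h1 := hx 1
  have h2 := hx 2
  simp only [IsDominant, total] at hd hul
  simp only [Function.iterate_one, arnouxRauzy, swapHalves, circleRotation, total]
  split_ifs <;> constructor <;> linarith

lemma isInduced_subtract_zero (hx : ∀ i, 0 < x i) (hd : IsDominant x 0) :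
    IsInduced (arnouxRauzy x) (Ico 0 (total x)) (arnouxRauzy (subtract 0 x)) (Ico 0 (x 0))
      (inducedBase x) where
  mapsTo_base := by
    simpa only [total_subtract] using mapsTo_arnouxRauzy (subtract_pos hx hd)
  mapsTo := by
    refine (mapsTo_circleRotation (half_add_mem_Icc hx hd)).mono_right (Ico_subset_Ico_right ?_)
    unfold total
    linarith [hx 1, hx 2]
  visits := by simpa only [inducedBase_image hx hd] using everyOrbitMeets_Ico_zero hx hd
  return_eq v hv := by
    rw [arnouxRauzy_inducedBase hx hd hv, inducedBase_image hx hd]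
    obtain hva | hva := lt_or_ge v (x 0 - x 1 - x 2)
    · exact .inl (slit_eq_inducedBase hx ⟨hv.1, hva⟩)
    · refine .inr ⟨?_, arnouxRauzy_slit hx hd ⟨hva, hv.2⟩⟩
      rw [slit_of_ge hd hva]
      exact fun h => by linarith [h.2]

/-- Every orbit visits one of the half blocks with a code in `P`. -/
def Hits (x : Fin 3 → ℝ) (P : Set (Fin 3 × Bool)) : Prop :=
  EveryOrbitMeets (arnouxRauzy x) (Ico 0 (total x)) (⋃ i ∈ P, half x i)

/-- Every orbit visits every arc of length `g` of the circle. -/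
def HitsArcs (x : Fin 3 → ℝ) (g : ℝ) : Prop :=
  ∀ p, EveryOrbitMeets (arnouxRauzy x) (Ico 0 (total x)) (arc (total x) p g)

lemma biUnion_half_block {k : Fin 3} (hk : 0 < x k) :
    ⋃ i ∈ {i : Fin 3 × Bool | i.1 = k}, half x i = Ico (leftEnd x k) (leftEnd x k + x k) := by
  have : {i : Fin 3 × Bool | i.1 = k} = {(k, false), (k, true)} := by
    ext ⟨i, σ⟩
    cases σ <;> simp
  rw [this, biUnion_pair, half, half, Ico_union_Ico_eq_Ico] <;> linarith

lemma hits_block_zero (hx : ∀ i, 0 < x i) (hd : IsDominant x 0) : Hits x {i | i.1 = 0} := by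
  rw [Hits, biUnion_half_block (hx 0)]
  simpa [leftEnd] using everyOrbitMeets_Ico_zero hx hd

lemma everyOrbitMeets_of_slit (hx : ∀ i, 0 < x i) (hd : IsDominant x 0) {A B : Set ℝ}
    (hB : EveryOrbitMeets (arnouxRauzy (subtract 0 x)) (Ico 0 (x 0)) B)
    (hBA : MapsTo (slit x) (Ico 0 (x 0) ∩ B) A) :
    EveryOrbitMeets (arnouxRauzy x) (Ico 0 (total x)) A := by
  refine (isInduced_subtract_zero hx hd).everyOrbitMeets (mapsTo_arnouxRauzy hx) hB ?_
  rintro _ ⟨v, hv, rfl⟩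
  refine ⟨1, ?_⟩
  rw [Function.iterate_one, arnouxRauzy_inducedBase hx hd hv.1]
  exact hBA hv

lemma hits_of_hits_subtract_zero (hx : ∀ i, 0 < x i) (hd : IsDominant x 0)
    {P : Set (Fin 3 × Bool)} (h : Hits (subtract 0 x) P) : Hits x P := by
  rw [Hits, total_subtract] at h
  refine everyOrbitMeets_of_slit hx hd h ?_
  rintro v ⟨-, hvP⟩
  simp only [mem_iUnion] at hvP ⊢
  obtain ⟨i, hi, hvi⟩ := hvP
  exact ⟨i, hi, slit_mem_half hx hd hvi⟩

/-- If `x 1 ≤ x 2`, block `1` is mapped into the left half of block `0` and is the image of points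
of the right half; if `x 2 ≤ x 1`, block `2` plays this role with the halves exchanged. -/
lemma hits_half_zero (hx : ∀ i, 0 < x i) (hd : IsDominant x 0)
    (h : ∀ k ≠ 0, Hits x {i | i.1 = k}) (σ : Bool) : Hits x {(0, σ)} := by
  have hT := mapsTo_arnouxRauzy hx
  have hx1 := hx 1
  have hx2 := hx 2
  have h1 := h 1 (by decide)
  have h2 := h 2 (by decide)
  rw [Hits, biUnion_half_block (hx _)] at h1 h2
  rw [Hits, biUnion_singleton]
  simp only [IsDominant, total] at hd
  obtain hle | hle := le_total (x 1) (x 2) <;> cases σ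
  on_goal 1 => refine h1.of_mapsTo hT ?_
  on_goal 2 => refine h1.of_inter_preimage_subset hT ?_
  on_goal 3 => refine h2.of_inter_preimage_subset hT ?_
  on_goal 4 => refine h2.of_mapsTo hT ?_
  all_goals
    rintro u ⟨⟨hu0, hul⟩, hul', hur⟩
    simp only [half, leftEnd, arnouxRauzy, swapHalves, circleRotation, total, Matrix.cons_val] at *
    split_ifs at * <;> constructor <;> linarith

end FirstReturn

section Arcs

variable {x : Fin 3 → ℝ} {p g v : ℝ}

lemma HitsArcs.of_Ico (hl : 0 < total x)
    (h : ∀ p ∈ Ico 0 (total x),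
      EveryOrbitMeets (arnouxRauzy x) (Ico 0 (total x)) (arc (total x) p g)) : HitsArcs x g := by
  intro p
  rw [arc_congr (modEq_toIcoMod hl 0 p)]
  exact h _ (by simpa using toIcoMod_mem_Ico hl 0 p)

lemma inducedBase_mem_Ico (hx : ∀ i, 0 < x i) (hd : IsDominant x 0) (hp : 0 ≤ p)
    (hpg : p + g ≤ x 0) (hv : v ∈ Ico 0 (x 0)) (hva : v ∈ arc (x 0) (p - (x 1 + x 2) / 2) g) :
    inducedBase x v ∈ Ico p (p + g) := by
  have hψ := mapsTo_circleRotation (half_add_mem_Icc hx hd) hv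
  refine arc_inter_Ico_subset (hx 0) hp hpg ⟨hψ, ?_⟩
  rw [inducedBase, mem_arc_congr (circleRotation_modEq ..)]
  simpa using add_mem_arc_add hva ((x 1 + x 2) / 2)

lemma slit_mem_arc (hx : ∀ i, 0 < x i) (hd : IsDominant x 0) (hp : total x / 2 ≤ p)
    (hpg : p + g ≤ total x + (x 0 - x 1 - x 2) / 2) (hv : v ∈ Ico 0 (x 0))
    (hva : v ∈ arc (x 0) (p - (x 1 + x 2)) g) : slit x v ∈ arc (total x) p g := by
  obtain ⟨t, ht, hvt⟩ := hva
  obtain ⟨hv0, hvl⟩ := hv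
  obtain ⟨ht0, htl⟩ := ht
  refine ⟨t + (x 1 + x 2), ⟨by linarith, by linarith⟩, ?_⟩
  have htm : t ∈ Ico ((x 0 - x 1 - x 2) / 2) ((x 0 - x 1 - x 2) / 2 + x 0) := by
    simp only [total] at hp hpg
    constructor <;> linarith
  simp only [IsDominant, total] at hd
  unfold slit
  split_ifs with hvs
  · obtain rfl : v + x 0 = t := eq_of_modEq_of_mem_Ico (hx 0)
      ⟨by linarith [hx 1, hx 2], by linarith⟩ htm
      ((add_period_modEq _ _).trans hvt)
    rw [show v + x 0 + (x 1 + x 2) = v + total x by unfold total; ring]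
    exact (add_period_modEq _ _).symm
  · have : v = t := eq_of_modEq_of_mem_Ico (hx 0) ⟨by linarith, by linarith [hx 1, hx 2]⟩ htm hvt
    rw [this]

/-- `inducedBase` and `slit` are isometries away from their jumps, so they carry arcs of length `g`
to arcs of length `g`; every other arc of that length contains the `slit`-image of a half of
block `0`. -/
lemma hitsArcs_of_hitsArcs_subtract_zero (hx : ∀ i, 0 < x i) (hd : IsDominant x 0)
    (hσ : ∀ σ, Hits (subtract 0 x) {(0, σ)}) (hg : HitsArcs (subtract 0 x) g) :
    HitsArcs x g := by
  simp only [Hits, HitsArcs, total_subtract, biUnion_singleton] at hσ hg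
  refine .of_Ico (total_pos hx) fun p ⟨hp0, hpl⟩ => ?_
  obtain hp | hp := lt_or_ge p (total x / 2)
  · obtain hpg | hpg := le_or_gt (p + g) (x 0)
    · refine (isInduced_subtract_zero hx hd).everyOrbitMeets (mapsTo_arnouxRauzy hx)
        (hg (p - (x 1 + x 2) / 2)) ?_
      rintro _ ⟨v, ⟨hv, hva⟩, rfl⟩
      exact ⟨0, Ico_subset_arc (inducedBase_mem_Ico hx hd hp0 hpg hv hva)⟩
    · refine everyOrbitMeets_of_slit hx hd (hσ true) ?_
      rintro v ⟨-, hv⟩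
      simp only [half, leftEnd, subtract_zero, Matrix.cons_val] at hv
      refine Ico_subset_arc ?_
      rw [slit, if_neg (by linarith [hv.1])]
      simp only [total] at hp
      constructor <;> linarith [hv.1, hv.2]
  · obtain hpg | hpg := le_or_gt (p + g) (total x + (x 0 - x 1 - x 2) / 2)
    · exact everyOrbitMeets_of_slit hx hd (hg (p - (x 1 + x 2))) fun v hv =>
        slit_mem_arc hx hd hp hpg hv.1 hv.2
    · refine everyOrbitMeets_of_slit hx hd (hσ false) ?_
      rintro v ⟨-, hv⟩
      simp only [half, leftEnd, subtract_zero, Matrix.cons_val] at hv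
      rw [slit, if_pos (by linarith [hv.2])]
      exact ⟨v + total x, ⟨by linarith [hv.1], by linarith [hv.2]⟩, (add_period_modEq _ _).symm⟩

end Arcs

section Dense

variable {x : Fin 3 → ℝ}

/-- Every forward orbit of `arnouxRauzy x` is dense in its circle, in terms of arcs. -/
def HasDenseOrbits (x : Fin 3 → ℝ) : Prop := ∀ g > 0, HitsArcs x g

lemma HasDenseOrbits.everyOrbitMeets_Ico (h : HasDenseOrbits x) (hx : ∀ i, 0 < x i) {r s : ℝ}
    (hr : 0 ≤ r) (hrs : r < s) (hs : s ≤ total x) :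
    EveryOrbitMeets (arnouxRauzy x) (Ico 0 (total x)) (Ico r s) := by
  refine (h (s - r) (by linarith) r).trans (mapsTo_arnouxRauzy hx) fun u hu => ⟨0, ?_⟩
  simpa using arc_inter_Ico_subset (total_pos hx) hr (by linarith) hu

lemma hasDenseOrbits_subtract_zero (h : HasDenseOrbits x) (hx : ∀ i, 0 < x i)
    (hd : IsDominant x 0) : HasDenseOrbits (subtract 0 x) := by
  intro g hg
  rw [HitsArcs, total_subtract]
  intro p
  set t := (x 1 + x 2) / 2
  set r := toIcoMod (hx 0) 0 (p + t)
  have hpr : p ≡ r - t [PMOD x 0] :=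
    AddCommGroup.modEq_sub_iff_add_modEq.2 (modEq_toIcoMod (hx 0) 0 (p + t))
  have hr : r ∈ Ico 0 (x 0) := by simpa using toIcoMod_mem_Ico (hx 0) 0 (p + t)
  set s := min (r + g) (x 0)
  have hrs : Ico r s ⊆ Ico 0 (x 0) := Ico_subset_Ico hr.1 (min_le_right _ _)
  have hlt : x 0 ≤ total x := apply_le_total hx 0
  have hmeets := h.everyOrbitMeets_Ico hx hr.1 (lt_min (lt_add_of_pos_right r hg) hr.2)
    ((min_le_right _ _).trans hlt)
  have hind := isInduced_subtract_zero hx hd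
  refine (hind.everyOrbitMeets_base hmeets (by rwa [inducedBase_image hx hd])).mono fun v hv => ?_
  rw [arc_congr hpr]
  refine ⟨inducedBase x v - t, ⟨by linarith [hv.1], ?_⟩, ?_⟩
  · linarith [hv.2, min_le_left (r + g) (x 0)]
  · exact AddCommGroup.modEq_sub_iff_add_modEq.2 (circleRotation_modEq _ _ _).symm

end Dense

section Cyclic

variable {x : Fin 3 → ℝ} {j : Fin 3}

/-- Cyclic relabelling of the lengths. -/
def cyc (x : Fin 3 → ℝ) : Fin 3 → ℝ := fun i => x (i + 1)

lemma cyc_cyc_cyc (x : Fin 3 → ℝ) : cyc (cyc (cyc x)) = x := by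
  ext i
  fin_cases i <;> rfl

lemma total_cyc (x : Fin 3 → ℝ) : total (cyc x) = total x := by
  simp only [total, cyc, Fin.reduceAdd, zero_add]
  ring

lemma subtract_cyc (j : Fin 3) (x : Fin 3 → ℝ) :
    subtract j (cyc x) = cyc (subtract (j + 1) x) := by
  ext i
  simp only [subtract, cyc, total_cyc, Function.update_apply, add_left_inj]

lemma isDominant_cyc : IsDominant (cyc x) j ↔ IsDominant x (j + 1) := by
  rw [IsDominant, total_cyc, cyc, IsDominant]

lemma cyc_induction {C : Fin 3 → (Fin 3 → ℝ) → Prop} (zero : ∀ x, (∀ i, 0 < x i) → C 0 x)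
    (succ : ∀ j x, (∀ i, 0 < x i) → C j (cyc x) → C (j + 1) x) (hx : ∀ i, 0 < x i)
    (j : Fin 3) : C j x := by
  have step (j : Fin 3) (h : ∀ x, (∀ i, 0 < x i) → C j x) (x : Fin 3 → ℝ) (hx : ∀ i, 0 < x i) :
      C (j + 1) x :=
    succ j x hx (h _ fun i => hx (i + 1))
  fin_cases j
  · exact zero x hx
  · exact step 0 zero x hx
  · exact step 1 (step 0 zero) x hx

lemma IsDominant.induction {C : Fin 3 → (Fin 3 → ℝ) → Prop}
    (zero : ∀ x, (∀ i, 0 < x i) → IsDominant x 0 → C 0 x)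
    (succ : ∀ j x, (∀ i, 0 < x i) → IsDominant x (j + 1) → C j (cyc x) → C (j + 1) x)
    (hx : ∀ i, 0 < x i) (hd : IsDominant x j) : C j x :=
  cyc_induction (C := fun j x => IsDominant x j → C j x) zero
    (fun j x hx ih hd => succ j x hx hd (ih (isDominant_cyc.2 hd))) hx j hd

lemma length_mem_Icc (hx : ∀ i, 0 < x i) (j : Fin 3) : x j ∈ Icc 0 (total x) :=
  ⟨(hx j).le, apply_le_total hx j⟩

lemma swapHalves_circleRotation (hx : ∀ i, 0 < x i) {v : ℝ} (hv : v ∈ Ico 0 (total x)) :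
    swapHalves x (circleRotation (total x) (x 0) v) =
      circleRotation (total x) (x 0) (swapHalves (cyc x) v) := by
  obtain ⟨hv0, hvl⟩ := hv
  have h0 := hx 0
  have h1 := hx 1
  have h2 := hx 2
  have hcyc : swapHalves (cyc x) v =
      if v < x 1 / 2 then v + x 1 / 2
      else if v < x 1 then v - x 1 / 2
      else if v < x 1 + x 2 / 2 then v + x 2 / 2
      else if v < x 1 + x 2 then v - x 2 / 2
      else if v < x 1 + x 2 + x 0 / 2 then v + x 0 / 2
      else v - x 0 / 2 := rfl
  unfold total at *
  have hlow (h : v < x 1 + x 2) : circleRotation (x 0 + x 1 + x 2) (x 0) v = v + x 0 :=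
    if_pos (by linarith)
  have hhigh (h : ¬v < x 1 + x 2) :
      circleRotation (x 0 + x 1 + x 2) (x 0) v = v + x 0 - (x 0 + x 1 + x 2) :=
    if_neg (by linarith)
  rw [hcyc]
  split_ifs
  all_goals
    first | rw [hlow (by linarith)] | rw [hhigh (by linarith)]
    rw [swapHalves, circleRotation]
    split_ifs <;> linarith

lemma isInduced_cyc (hx : ∀ i, 0 < x i) :
    IsInduced (arnouxRauzy x) (Ico 0 (total x)) (arnouxRauzy (cyc x)) (Ico 0 (total x))
      (circleRotation (total x) (x 0)) where
  mapsTo_base := by simpa only [total_cyc] using mapsTo_arnouxRauzy (x := cyc x) fun i => hx (i + 1)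
  mapsTo := mapsTo_circleRotation (length_mem_Icc hx 0)
  visits u hu := ⟨0, by rwa [circleRotation_image_Ico (length_mem_Icc hx 0)]⟩
  return_eq v hv := by
    left
    have hl := total_pos hx
    have hS : swapHalves (cyc x) v ∈ Ico 0 (total x) := by
      simpa only [total_cyc] using
        mapsTo_swapHalves (x := cyc x) (fun i => hx (i + 1)) (by rwa [total_cyc])
    rw [arnouxRauzy, arnouxRauzy, total_cyc, swapHalves_circleRotation hx hv]
    exact circleRotation_comm (length_mem_Icc hx 0) ⟨by linarith, by linarith⟩ hS

/-- The relabelling of the codes of the half blocks that corresponds to `cyc`. -/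
def cycCode (i : Fin 3 × Bool) : Fin 3 × Bool := (i.1 + 1, i.2)

lemma circleRotation_mem_half (hx : ∀ i, 0 < x i) {i : Fin 3 × Bool} {v : ℝ}
    (hv : v ∈ half (cyc x) i) : circleRotation (total x) (x 0) v ∈ half x (cycCode i) := by
  have h1 := hx 1
  have h2 := hx 2
  obtain ⟨k, σ⟩ := i
  fin_cases k <;> cases σ <;>
    simp only [half, leftEnd, cyc, cycCode, Fin.zero_eta, Fin.mk_one, Fin.reduceFinMk,
      Fin.reduceAdd, zero_add, Matrix.cons_val, mem_Ico] at hv ⊢ <;>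
    unfold circleRotation total <;>
    split_ifs <;> constructor <;> linarith

lemma everyOrbitMeets_of_cyc (hx : ∀ i, 0 < x i) {A B : Set ℝ}
    (hB : EveryOrbitMeets (arnouxRauzy (cyc x)) (Ico 0 (total (cyc x))) B)
    (hBA : ∀ v ∈ B, circleRotation (total x) (x 0) v ∈ A) :
    EveryOrbitMeets (arnouxRauzy x) (Ico 0 (total x)) A := by
  rw [total_cyc] at hB
  refine (isInduced_cyc hx).everyOrbitMeets (mapsTo_arnouxRauzy hx) hB ?_
  rintro _ ⟨v, hv, rfl⟩
  exact ⟨0, hBA v hv.2⟩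

lemma hits_cyc (hx : ∀ i, 0 < x i) {P : Set (Fin 3 × Bool)} :
    Hits (cyc x) (cycCode ⁻¹' P) ↔ Hits x P := by
  have mp {x} (hx : ∀ i, 0 < x i) {P} (h : Hits (cyc x) (cycCode ⁻¹' P)) : Hits x P := by
    refine everyOrbitMeets_of_cyc hx h fun v hv => ?_
    simp only [mem_iUnion] at hv ⊢
    obtain ⟨i, hi, hvi⟩ := hv
    exact ⟨cycCode i, hi, circleRotation_mem_half hx hvi⟩
  refine ⟨mp hx, fun h =>
    mp (x := cyc x) (fun i => hx _) (mp (x := cyc (cyc x)) (fun i => hx _) ?_)⟩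
  rw [cyc_cyc_cyc]
  convert h
  ext ⟨i, σ⟩
  simp [cycCode, add_assoc]

lemma hitsArcs_cyc (hx : ∀ i, 0 < x i) {g : ℝ} : HitsArcs (cyc x) g ↔ HitsArcs x g := by
  have mp {x} (hx : ∀ i, 0 < x i) (h : HitsArcs (cyc x) g) : HitsArcs x g := by
    intro p
    refine everyOrbitMeets_of_cyc hx (h (p - x 0)) fun v hv => ?_
    rw [mem_arc_congr (circleRotation_modEq ..)]
    simpa [total_cyc] using add_mem_arc_add hv (x 0)
  refine ⟨mp hx, fun h =>
    mp (x := cyc x) (fun i => hx _) (mp (x := cyc (cyc x)) (fun i => hx _) ?_)⟩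
  rwa [cyc_cyc_cyc]

lemma hasDenseOrbits_cyc (hx : ∀ i, 0 < x i) : HasDenseOrbits (cyc x) ↔ HasDenseOrbits x :=
  forall₂_congr fun _ _ => hitsArcs_cyc hx

lemma cycCode_preimage_block (k : Fin 3) :
    cycCode ⁻¹' {i | i.1 = k + 1} = {i | i.1 = k} := by
  ext i
  simp [cycCode]

lemma cycCode_preimage_singleton (k : Fin 3) (σ : Bool) :
    cycCode ⁻¹' {(k + 1, σ)} = {(k, σ)} := by
  ext i
  simp [cycCode, Prod.ext_iff]

end Cyclic

section General

variable {x : Fin 3 → ℝ} {j : Fin 3} {g : ℝ}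

lemma hits_block_of_isDominant (hx : ∀ i, 0 < x i) (hd : IsDominant x j) :
    Hits x {i | i.1 = j} := by
  refine IsDominant.induction (C := fun j x => Hits x {i | i.1 = j}) (fun x => hits_block_zero)
    (fun j x hx _ ih => ?_) hx hd
  rwa [← cycCode_preimage_block, hits_cyc hx] at ih

lemma hits_subtract_cyc (hx : ∀ i, 0 < x i) (hd : IsDominant x (j + 1))
    {P : Set (Fin 3 × Bool)} :
    Hits (subtract j (cyc x)) (cycCode ⁻¹' P) ↔ Hits (subtract (j + 1) x) P := by
  rw [subtract_cyc, hits_cyc (subtract_pos hx hd)]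

lemma hits_of_hits_subtract (hx : ∀ i, 0 < x i) (hd : IsDominant x j)
    {P : Set (Fin 3 × Bool)} (h : Hits (subtract j x) P) : Hits x P := by
  refine IsDominant.induction (C := fun j x => ∀ P, Hits (subtract j x) P → Hits x P)
    (fun x hx hd P => hits_of_hits_subtract_zero hx hd) (fun j x hx hd ih P h => ?_) hx hd P h
  exact (hits_cyc hx).1 (ih _ ((hits_subtract_cyc hx hd).2 h))

lemma hits_half_of_hits_block (hx : ∀ i, 0 < x i) (hd : IsDominant x j)
    (h : ∀ k ≠ j, Hits x {i | i.1 = k}) (σ : Bool) : Hits x {(j, σ)} := by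
  refine IsDominant.induction (C := fun j x => (∀ k ≠ j, Hits x {i | i.1 = k}) → Hits x {(j, σ)})
    (fun x hx hd h => hits_half_zero hx hd h σ) (fun j x hx _ ih h => ?_) hx hd h
  rw [← hits_cyc hx, cycCode_preimage_singleton]
  refine ih fun k hk => ?_
  rw [← cycCode_preimage_block, hits_cyc hx]
  exact h _ (by simpa using hk)

lemma hitsArcs_of_hitsArcs_subtract (hx : ∀ i, 0 < x i) (hd : IsDominant x j)
    (hσ : ∀ σ, Hits (subtract j x) {(j, σ)}) (hg : HitsArcs (subtract j x) g) :
    HitsArcs x g := by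
  refine IsDominant.induction
    (C := fun j x => (∀ σ, Hits (subtract j x) {(j, σ)}) → HitsArcs (subtract j x) g →
      HitsArcs x g)
    (fun x hx hd => hitsArcs_of_hitsArcs_subtract_zero hx hd)
    (fun j x hx hd ih hσ hg => (hitsArcs_cyc hx).1 (ih (fun σ => ?_) ?_)) hx hd hσ hg
  · rw [← cycCode_preimage_singleton, hits_subtract_cyc hx hd]
    exact hσ σ
  · rwa [subtract_cyc, hitsArcs_cyc (subtract_pos hx hd)]

lemma hasDenseOrbits_subtract (h : HasDenseOrbits x) (hx : ∀ i, 0 < x i) (hd : IsDominant x j) :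
    HasDenseOrbits (subtract j x) := by
  refine IsDominant.induction (C := fun j x => HasDenseOrbits x → HasDenseOrbits (subtract j x))
    (fun x hx hd h => hasDenseOrbits_subtract_zero h hx hd) (fun j x hx hd ih h => ?_) hx hd h
  rw [← hasDenseOrbits_cyc (subtract_pos hx hd), ← subtract_cyc]
  exact ih ((hasDenseOrbits_cyc hx).2 h)

end General

section Triangle

variable {x : Fin 3 → ℝ}

/-- If no length reaches half of the total, three points in the left halves form an orbit of period
three: the translations by `(x i + total x) / 2` add up to two full turns. -/
lemma not_hasDenseOrbits_of_forall_lt (hx : ∀ i, 0 < x i) (h : ∀ i, 2 * x i < total x) :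
    ¬HasDenseOrbits x := by
  intro hdense
  have hx0 := hx 0
  have hx1 := hx 1
  have hx2 := hx 2
  have h0 := h 0
  have h1 := h 1
  have h2 := h 2
  obtain ⟨M, hM0, hM1, hM2, hM⟩ :
      ∃ M, x 0 ≤ M ∧ x 1 ≤ M ∧ x 2 ≤ M ∧ 2 * M < total x :=
    ⟨max (x 0) (max (x 1) (x 2)), by simp, by simp, by simp, by grind⟩
  have hmeets := hdense.everyOrbitMeets_Ico hx (r := x 0 / 2) (s := x 0)
    (by linarith) (by linarith) (apply_le_total hx 0)
  simp only [total] at h0 h1 h2 hM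
  let O : Set ℝ := {(M - x 2) / 2, (M + x 0) / 2, x 0 + (M + x 1) / 2}
  have hsub : O ⊆ Ico 0 (total x) := by
    simp only [total]
    rintro _ (rfl | rfl | rfl) <;> constructor <;> linarith
  have hmaps : MapsTo (arnouxRauzy x) O O := by
    rintro _ (rfl | rfl | rfl)
    on_goal 1 => refine .inr (.inr ?_)
    on_goal 2 => refine .inl ?_
    on_goal 3 => refine .inr (.inl ?_)
    all_goals
      simp only [arnouxRauzy, swapHalves, circleRotation, total, mem_singleton_iff]
      split_ifs <;> linarith
  obtain ⟨u, rfl | rfl | rfl, hl, hr⟩ := hmeets.inter_nonempty ⟨_, .inl rfl⟩ hsub hmaps <;>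
    linarith

lemma not_hasDenseOrbits_of_eq_zero (hx : ∀ i, 0 < x i) (h : 2 * x 0 = total x) :
    ¬HasDenseOrbits x := by
  intro hdense
  have hx0 := hx 0
  have hx1 := hx 1
  have hx2 := hx 2
  have hmeets := hdense.everyOrbitMeets_Ico hx (r := 0) (s := x 1 / 2) le_rfl (by linarith)
    (by unfold total; linarith)
  simp only [total] at h
  let O : Set ℝ := Ico (x 1 / 2) (x 1 + x 2 / 2) ∪ Ico (x 0) (x 0 + x 1 / 2) ∪
    Ico (x 0 + x 1 + x 2 / 2) (x 0 + x 1 + x 2)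
  have hsub : O ⊆ Ico 0 (total x) := by
    simp only [total]
    rintro u ((⟨hl, hr⟩ | ⟨hl, hr⟩) | ⟨hl, hr⟩) <;> constructor <;> linarith
  have hmaps : MapsTo (arnouxRauzy x) O O := by
    intro u hu
    simp only [O, mem_union, mem_Ico] at hu ⊢
    simp only [arnouxRauzy, swapHalves, circleRotation, total]
    split_ifs <;> grind
  obtain ⟨u, (hu | hu) | hu, -, hr⟩ :=
    hmeets.inter_nonempty ⟨x 0, .inl (.inr ⟨le_rfl, by linarith⟩)⟩ hsub hmaps <;>
    linarith [hu.1]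

lemma not_hasDenseOrbits_of_eq (hx : ∀ i, 0 < x i) {j : Fin 3} (h : 2 * x j = total x) :
    ¬HasDenseOrbits x := by
  refine cyc_induction (C := fun j x => 2 * x j = total x → ¬HasDenseOrbits x)
    (fun x => not_hasDenseOrbits_of_eq_zero) (fun j x hx ih h => ?_) hx j h
  rw [← hasDenseOrbits_cyc hx]
  exact ih (by rwa [total_cyc])

lemma HasDenseOrbits.exists_isDominant (h : HasDenseOrbits x) (hx : ∀ i, 0 < x i) :
    ∃ j, IsDominant x j := by
  by_contra! hd
  simp only [IsDominant, not_lt] at hd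
  refine not_hasDenseOrbits_of_forall_lt hx (fun i => (hd i).lt_of_ne fun hi => ?_) h
  exact not_hasDenseOrbits_of_eq hx hi h

end Triangle

section Expansion

open Filter Topology

variable {x : Fin 3 → ℝ} {j k : Fin 3}

/-- An infinite run `y 0, y 1, …` of the unnormalised Rauzy algorithm, in which the letter `j n` is
subtracted from at time `n`. -/
structure IsExpansion (y : ℕ → Fin 3 → ℝ) (j : ℕ → Fin 3) : Prop where
  pos : ∀ n i, 0 < y n i
  isDominant : ∀ n, IsDominant (y n) (j n)
  succ_eq : ∀ n, y (n + 1) = subtract (j n) (y n)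

lemma subtract_apply_of_ne (h : j ≠ k) (x : Fin 3 → ℝ) : subtract j x k = x k :=
  Function.update_of_ne h.symm _ _

lemma subtract_apply_le (hx : ∀ i, 0 < x i) (j k : Fin 3) : subtract j x k ≤ x k := by
  obtain rfl | h := eq_or_ne j k
  · rw [subtract, Function.update_self]
    linarith [apply_le_total hx j]
  · rw [subtract_apply_of_ne h]

namespace IsExpansion

variable {y : ℕ → Fin 3 → ℝ} {j : ℕ → Fin 3} {g : ℝ} {n : ℕ}

lemma antitone_apply (h : IsExpansion y j) (k : Fin 3) : Antitone fun n => y n k :=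
  antitone_nat_of_succ_le fun n => by
    rw [h.succ_eq]
    exact subtract_apply_le (h.pos n) _ _

lemma total_succ_add_le (h : IsExpansion y j) (hk : j n ≠ k) :
    total (y (n + 1)) + y n k ≤ total (y n) := by
  rw [h.succ_eq, total_subtract]
  exact add_apply_le_total (h.pos n) hk

lemma antitone_total (h : IsExpansion y j) : Antitone fun n => total (y n) :=
  antitone_nat_of_succ_le fun n => by
    rw [h.succ_eq, total_subtract]
    exact apply_le_total (h.pos n) _

/-- As long as the letter `k` does not occur, `y · k` stays constant and is a lower bound for the
decrease of the total at each step. -/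
lemma exists_add_eq (h : IsExpansion y j) (n : ℕ) (k : Fin 3) : ∃ m, j (n + m) = k := by
  by_contra! hne
  have hconst (m : ℕ) : y (n + m) k = y n k := by
    induction m with
    | zero => rfl
    | succ m ih => rw [← add_assoc, h.succ_eq, subtract_apply_of_ne (hne m), ih]
  have hdrop (m : ℕ) : total (y (n + m)) + m * y n k ≤ total (y n) := by
    induction m with
    | zero => simp
    | succ m ih =>
      have := h.total_succ_add_le (hne m)
      rw [hconst, add_assoc n m 1] at this
      push_cast
      linarith
  obtain ⟨m, hm⟩ := exists_nat_gt (total (y n) / y n k)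
  rw [div_lt_iff₀ (h.pos n k)] at hm
  linarith [hdrop m, total_pos (h.pos (n + m))]

lemma tendsto_total_sub (h : IsExpansion y j) :
    Tendsto (fun n => total (y n) - total (y (n + 1))) atTop (𝓝 0) := by
  have hlim := tendsto_atTop_ciInf h.antitone_total
    ⟨0, forall_mem_range.2 fun n => (total_pos (h.pos n)).le⟩
  simpa using hlim.sub ((tendsto_add_atTop_iff_nat 1).2 hlim)

lemma exists_apply_lt (h : IsExpansion y j) (hg : 0 < g) (k : Fin 3) : ∃ n, y n k < g := by
  obtain ⟨N, hN⟩ := eventually_atTop.1 (h.tendsto_total_sub.eventually_lt_const hg)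
  obtain ⟨m, hm⟩ := h.exists_add_eq N (k + 1)
  have hne : j (N + m) ≠ k := by simp [hm]
  exact ⟨N + m, by linarith [hN (N + m) (by lia), h.total_succ_add_le hne]⟩

lemma exists_total_lt (h : IsExpansion y j) (hg : 0 < g) : ∃ n, total (y n) < g := by
  choose n hn using h.exists_apply_lt (g := g / 3) (by linarith)
  refine ⟨n 0 + n 1 + n 2, ?_⟩
  have hle (k : Fin 3) (hk : n k ≤ n 0 + n 1 + n 2) : y (n 0 + n 1 + n 2) k < g / 3 :=
    (h.antitone_apply k hk).trans_lt (hn k)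
  unfold total
  linarith [hle 0 (by lia), hle 1 (by lia), hle 2 (by lia)]

lemma hits_of_hits_add (h : IsExpansion y j) {P : Set (Fin 3 × Bool)} {m : ℕ}
    (hm : Hits (y (n + m)) P) : Hits (y n) P := by
  induction m with
  | zero => exact hm
  | succ m ih =>
    rw [← add_assoc, h.succ_eq] at hm
    exact ih (hits_of_hits_subtract (h.pos _) (h.isDominant _) hm)

lemma hits_block (h : IsExpansion y j) (n : ℕ) (k : Fin 3) : Hits (y n) {i | i.1 = k} := by
  obtain ⟨m, rfl⟩ := h.exists_add_eq n k
  exact h.hits_of_hits_add (hits_block_of_isDominant (h.pos _) (h.isDominant _))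

lemma hits_half (h : IsExpansion y j) (n : ℕ) (k : Fin 3) (σ : Bool) : Hits (y n) {(k, σ)} := by
  obtain ⟨m, rfl⟩ := h.exists_add_eq n k
  exact h.hits_of_hits_add
    (hits_half_of_hits_block (h.pos _) (h.isDominant _) (fun k _ => h.hits_block _ k) σ)

lemma hitsArcs_zero (h : IsExpansion y j) (hg : HitsArcs (y n) g) : HitsArcs (y 0) g := by
  induction n with
  | zero => exact hg
  | succ n ih =>
    rw [h.succ_eq] at hg
    refine ih (hitsArcs_of_hitsArcs_subtract (h.pos _) (h.isDominant _) (fun σ => ?_) hg)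
    rw [← h.succ_eq]
    exact h.hits_half _ _ σ

/-- Once the total length is at most `g`, an arc of length `g` is the whole circle. -/
lemma hasDenseOrbits (h : IsExpansion y j) : HasDenseOrbits (y 0) := by
  intro g hg
  obtain ⟨n, hn⟩ := h.exists_total_lt hg
  refine h.hitsArcs_zero (n := n) fun p u _ => ⟨0, ?_⟩
  rw [arc_eq_univ (total_pos (h.pos n)) hn.le]
  exact mem_univ _

end IsExpansion

lemma HasDenseOrbits.exists_isExpansion (h : HasDenseOrbits x) (hx : ∀ i, 0 < x i) :
    ∃ y j, IsExpansion y j ∧ y 0 = x := by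
  let S := {x : Fin 3 → ℝ // (∀ i, 0 < x i) ∧ HasDenseOrbits x}
  choose j hj using fun x : S => x.2.2.exists_isDominant x.2.1
  let next (x : S) : S := ⟨subtract (j x) x.1, subtract_pos x.2.1 (hj x),
    hasDenseOrbits_subtract x.2.2 x.2.1 (hj x)⟩
  let z (n : ℕ) : S := next^[n] ⟨x, hx, h⟩
  refine ⟨fun n => (z n).1, fun n => j (z n), ⟨fun n => (z n).2.1, fun n => hj (z n), ?_⟩, rfl⟩
  intro n
  simp only [z, Function.iterate_succ_apply', next]

lemma hasDenseOrbits_iff_exists_isExpansion (hx : ∀ i, 0 < x i) :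
    HasDenseOrbits x ↔ ∃ y j, IsExpansion y j ∧ y 0 = x := by
  refine ⟨fun h => h.exists_isExpansion hx, ?_⟩
  rintro ⟨y, j, h, rfl⟩
  exact h.hasDenseOrbits

end Expansion

section Gasket

variable {x : Fin 3 → ℝ} {j : Fin 3} {c : ℝ}

lemma total_smul (c : ℝ) (x : Fin 3 → ℝ) : total (c • x) = c * total x := by
  simp only [total, Pi.smul_apply, smul_eq_mul, mul_add]

lemma subtract_smul (j : Fin 3) (c : ℝ) (x : Fin 3 → ℝ) :
    subtract j (c • x) = c • subtract j x := by
  unfold subtract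
  rw [← Function.update_smul, total_smul, Pi.smul_apply, smul_eq_mul, smul_eq_mul]
  congr 1
  ring

lemma isDominant_smul (hc : 0 < c) : IsDominant (c • x) j ↔ IsDominant x j := by
  rw [IsDominant, total_smul, Pi.smul_apply, smul_eq_mul, mul_left_comm,
    mul_lt_mul_iff_right₀ hc, IsDominant]

lemma isDominant_iff_half_lt (h : total x = 1) : IsDominant x j ↔ 1 / 2 < x j := by
  rw [IsDominant, h]
  constructor <;> intro <;> linarith

lemma rauzyStepAt_eq_smul_subtract (h : total x = 1) (j : Fin 3) :
    rauzyStepAt j x = (x j)⁻¹ • subtract j x := by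
  ext i
  simp only [rauzyStepAt, subtract, h, Pi.smul_apply, smul_eq_mul, Function.update_apply]
  exact div_eq_inv_mul _ _

lemma IsExpansion.inRauzyGasket {y : ℕ → Fin 3 → ℝ} {j : ℕ → Fin 3} (h : IsExpansion y j)
    (h0 : total (y 0) = 1) : InRauzyGasket (y 0) := by
  refine ⟨fun i => (h.pos 0 i).le, h0, fun n => (total (y n))⁻¹ • y n, by simp [h0], fun n => ?_⟩
  have hl := total_pos (h.pos n)
  have hz : total ((total (y n))⁻¹ • y n) = 1 := by
    rw [total_smul, inv_mul_cancel₀ hl.ne']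
  refine ⟨j n, ?_, ?_⟩
  · rw [← isDominant_iff_half_lt hz, isDominant_smul (inv_pos.2 hl)]
    exact h.isDominant n
  · beta_reduce
    rw [rauzyStepAt_eq_smul_subtract hz, h.succ_eq, total_subtract, subtract_smul, smul_smul,
      Pi.smul_apply, smul_eq_mul, mul_inv, inv_inv, mul_right_comm, mul_inv_cancel₀ hl.ne', one_mul]

/-- The normalising factors of the Rauzy algorithm are undone by multiplying them up. -/
lemma InRauzyGasket.exists_isExpansion (h : InRauzyGasket x) (hx : ∀ i, 0 < x i) :
    ∃ y j, IsExpansion y j ∧ y 0 = x := by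
  obtain ⟨-, hsum, z, h0, hz⟩ := h
  choose j hj hs using hz
  have hpos (n : ℕ) : (∀ i, 0 < z n i) ∧ total (z n) = 1 := by
    induction n with
    | zero => exact h0 ▸ ⟨hx, hsum⟩
    | succ n ih =>
      obtain ⟨hp, ht⟩ := ih
      have hd := (isDominant_iff_half_lt ht).2 (hj n)
      rw [hs, rauzyStepAt_eq_smul_subtract ht, total_smul, total_subtract]
      exact ⟨fun i => mul_pos (inv_pos.2 (hp _)) (subtract_pos hp hd i), inv_mul_cancel₀ (hp _).ne'⟩
  have hprod (n : ℕ) : 0 < ∏ i ∈ Finset.range n, z i (j i) :=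
    Finset.prod_pos fun i _ => (hpos i).1 _
  refine ⟨fun n => (∏ i ∈ Finset.range n, z i (j i)) • z n, j,
    ⟨fun n i => ?_, fun n => ?_, fun n => ?_⟩, by simp [h0]⟩
  · exact mul_pos (hprod n) ((hpos n).1 i)
  · exact (isDominant_smul (hprod n)).2 ((isDominant_iff_half_lt (hpos n).2).2 (hj n))
  · rw [hs, rauzyStepAt_eq_smul_subtract (hpos n).2, subtract_smul, Finset.prod_range_succ,
      smul_smul, mul_inv_cancel_right₀ ((hpos n).1 _).ne']

lemma inRauzyGasket_iff_exists_isExpansion (hx : ∀ i, 0 < x i) (h : total x = 1) :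
    InRauzyGasket x ↔ ∃ y j, IsExpansion y j ∧ y 0 = x := by
  refine ⟨fun h => h.exists_isExpansion hx, ?_⟩
  rintro ⟨y, j, hy, rfl⟩
  exact hy.inRauzyGasket h

end Gasket

section Bridge

lemma rep_mem_Ico (v : AddCircle (1 : ℝ)) : rep v ∈ Ico (0 : ℝ) 1 := by
  simpa only [rep, zero_add] using (AddCircle.equivIco 1 0 v).2

lemma toCirc_rep (v : AddCircle (1 : ℝ)) : toCirc (rep v) = v :=
  (AddCircle.equivIco 1 0).symm_apply_apply v

lemma toCirc_eq_toCirc_iff {t s : ℝ} : toCirc t = toCirc s ↔ t ≡ s [PMOD (1 : ℝ)] :=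
  AddCommGroup.modEq_iff_eq_mod_zmultiples.symm

lemma rep_toCirc_modEq (t : ℝ) : rep (toCirc t) ≡ t [PMOD (1 : ℝ)] :=
  toCirc_eq_toCirc_iff.1 (toCirc_rep _)

lemma rep_toCirc {t r : ℝ} (hr : r ∈ Ico (0 : ℝ) 1) (h : t ≡ r [PMOD (1 : ℝ)]) :
    rep (toCirc t) = r :=
  eq_of_modEq_of_mem_Ico (p := 0) one_pos (by simpa using rep_mem_Ico _) (by simpa using hr)
    ((rep_toCirc_modEq t).trans h)

lemma ARmap_eq_toCirc_swapHalves (x : Fin 3 → ℝ) (v : AddCircle (1 : ℝ)) :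
    ARmap (x 0) (x 1) (x 2) v = toCirc (swapHalves x (rep v) + 1 / 2) := by
  unfold ARmap swapHalves
  split_ifs <;> rfl

lemma rep_ARmap {x : Fin 3 → ℝ} (hx : ∀ i, 0 < x i) (htotal : total x = 1)
    (v : AddCircle (1 : ℝ)) :
    rep (ARmap (x 0) (x 1) (x 2) v) = arnouxRauzy x (rep v) := by
  rw [ARmap_eq_toCirc_swapHalves]
  refine rep_toCirc ?_ ?_
  · simpa only [htotal] using mapsTo_arnouxRauzy hx (by simpa only [htotal] using rep_mem_Ico v)
  · rw [arnouxRauzy, htotal]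
    exact (circleRotation_modEq _ _ _).symm

lemma dense_iff_forall_exists_rep_mem_arc {A : Set (AddCircle (1 : ℝ))} :
    Dense A ↔ ∀ g > 0, ∀ p, ∃ v ∈ A, rep v ∈ arc 1 p g := by
  have hquot : IsOpenQuotientMap toCirc := QuotientAddGroup.isOpenQuotientMap_mk
  rw [← hquot.dense_preimage_iff, dense_iff_exists_between]
  constructor
  · intro h g hg p
    obtain ⟨t, htA, hpt, htg⟩ := h p (p + g) (lt_add_of_pos_right p hg)
    exact ⟨toCirc t, htA, t, ⟨hpt.le, htg⟩, rep_toCirc_modEq t⟩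
  · intro h a b hab
    obtain ⟨v, hvA, t, ⟨hpt, htg⟩, hvt⟩ := h ((b - a) / 2) (by linarith) ((a + b) / 2)
    have htv : toCirc t = v := by rw [← toCirc_eq_toCirc_iff.2 hvt, toCirc_rep]
    exact ⟨t, by rwa [mem_preimage, htv], by linarith, by linarith⟩

lemma isMinimal_ARmap_iff_hasDenseOrbits {x : Fin 3 → ℝ} (hx : ∀ i, 0 < x i)
    (htotal : total x = 1) :
    IsMinimal (ARmap (x 0) (x 1) (x 2)) ↔ HasDenseOrbits x := by
  have hiter (n : ℕ) (v : AddCircle (1 : ℝ)) :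
      rep ((ARmap (x 0) (x 1) (x 2))^[n] v) = (arnouxRauzy x)^[n] (rep v) :=
    Function.Semiconj.iterate_right (rep_ARmap hx htotal) n v
  simp only [IsMinimal, dense_iff_forall_exists_rep_mem_arc, exists_range_iff, hiter,
    HasDenseOrbits, HitsArcs, EveryOrbitMeets, htotal]
  constructor
  · intro h g hg p u hu
    simpa only [rep_toCirc hu AddCommGroup.modEq_rfl] using h (toCirc u) g hg p
  · exact fun h v g hg p => h g hg p (rep v) (rep_mem_Ico v)

end Bridge

/-- Arnoux–Rauzy: `T^{x1,x2,x3}` is minimal iff `(x1,x2,x3)` lies in the Rauzy gasket. -/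
theorem statement2 (x1 x2 x3 : ℝ)
    (h1 : 0 < x1) (h2 : 0 < x2) (h3 : 0 < x3) (hsum : x1 + x2 + x3 = 1) :
    IsMinimal (ARmap x1 x2 x3) ↔ InRauzyGasket ![x1, x2, x3] := by
  have hx (i : Fin 3) : 0 < ![x1, x2, x3] i := by fin_cases i <;> assumption
  calc IsMinimal (ARmap x1 x2 x3)
    _ ↔ HasDenseOrbits ![x1, x2, x3] := isMinimal_ARmap_iff_hasDenseOrbits hx hsum
    _ ↔ ∃ y j, IsExpansion y j ∧ y 0 = ![x1, x2, x3] := hasDenseOrbits_iff_exists_isExpansion hx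
    _ ↔ InRauzyGasket ![x1, x2, x3] := (inRauzyGasket_iff_exists_isExpansion hx hsum).symm

end
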